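/- Let G be a finite undirected multigraph and A an Abelian group. The Abelian group W(V∪E,A) of all balanced functions h:V∪E→A is isomorphic to A^{|V|+con₃(G)−con(G)}, where con₃(G) is the number of 3-edge-connected equivalence classes of vertices and con(G) is the number of connected components of G. -/

import Mathlib

open Finset

/-- A finite undirected multigraph: each edge `e : E` has an unordered pair of
endpoints `ends e : Sym2 V`.  Loops and parallel edges are allowed and the graph
need not be connected. -/
structure Multigraph (V E : Type*) where
  ends : E → Sym2 V

namespace Multigraph

variable {V E : Type*}

/-- `G.IsChain x y p` : `p` is an alternating sequence `v₁,e₁,…,vₙ,eₙ` (encoded as a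
list of vertex-edge pairs) which forms a walk from `x` to `y` (the final vertex `y`
is omitted, i.e. this is "truncated"). -/
def IsChain (G : Multigraph V E) : V → V → List (V × E) → Prop
  | x, y, [] => x = y
  | x, y, (v, e) :: rest => v = x ∧ ∃ w, G.ends e = s(x, w) ∧ G.IsChain w y rest

/-- A truncated trail (ttrail) from `x` to `y`: an alternating walk with no repeated
edges, final vertex omitted. -/
def IsTtrail (G : Multigraph V E) (x y : V) (p : List (V × E)) : Prop :=
  G.IsChain x y p ∧ (p.map Prod.snd).Nodup

/-- A cycle: a closed ttrail with no repeated vertices. -/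
def IsCycle (G : Multigraph V E) (x : V) (p : List (V × E)) : Prop :=
  G.IsTtrail x x p ∧ (p.map Prod.fst).Nodup

/-- Two ttrails are edge-disjoint if they have no common edges. -/
def EdgeDisjoint (p q : List (V × E)) : Prop :=
  ∀ e, e ∈ p.map Prod.snd → e ∉ q.map Prod.snd

/-- `k`-edge-connectivity: two distinct vertices are `k`-edge-connected if there are
`k` pairwise edge-disjoint ttrails between them; every vertex is `k`-edge-connected
to itself. -/
def KConn (G : Multigraph V E) (k : ℕ) (v w : V) : Prop :=
  v = w ∨ ∃ p : Fin k → List (V × E),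
    (∀ i, G.IsTtrail v w (p i)) ∧ ∀ i j, i ≠ j → EdgeDisjoint (p i) (p j)

/-- `conk G k` : the number of equivalence classes of `k`-edge-connected vertices. -/
noncomputable def conk (G : Multigraph V E) (k : ℕ) : ℕ :=
  Nat.card (Quotient (Relation.EqvGen.setoid (G.KConn k)))

/-- The number of connected components of `G`. -/
noncomputable def con (G : Multigraph V E) : ℕ := G.conk 1

section Homology

variable [Fintype V] [Fintype E] [DecidableEq V] [DecidableEq E]

/-- The vector in `F₂^V` which is the sum of the two endpoints of the edge `e`
(so a loop is sent to `0`). -/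
def edgeVec (G : Multigraph V E) (e : E) : V → ZMod 2 := fun v =>
  Sym2.lift ⟨fun a b => (if v = a then (1 : ZMod 2) else 0) + (if v = b then 1 else 0),
    fun _ _ => add_comm _ _⟩ (G.ends e)

/-- The boundary map `δ : F₂^E → F₂^V`, sending each edge to the sum of its two
adjacent vertices. -/
def boundary (G : Multigraph V E) : (E → ZMod 2) →ₗ[ZMod 2] (V → ZMod 2) where
  toFun c := fun v => ∑ e, c e * G.edgeVec e v
  map_add' c d := by
    funext v
    simp [add_mul, Finset.sum_add_distrib]
  map_smul' r c := by
    funext v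
    simp [Finset.mul_sum, mul_assoc]

/-- The Cycle Space of `G` : the kernel of the boundary map. -/
def cycleSpace (G : Multigraph V E) : Submodule (ZMod 2) (E → ZMod 2) :=
  LinearMap.ker G.boundary

/-- The indicator vector of a vertex in `F₂^V`. -/
def vert (v : V) : V → ZMod 2 := fun w => if w = v then 1 else 0

/-- A `k`-weak homological cycle: a homological path between two `k`-edge-connected
vertices. -/
def IsWeakCycle (G : Multigraph V E) (k : ℕ) (c : E → ZMod 2) : Prop :=
  ∃ v w, G.KConn k v w ∧ G.boundary c = vert v + vert w

/-- The `k`-Weak Cycle Space: the span of all `k`-weak homological cycles. -/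
def weakCycleSpace (G : Multigraph V E) (k : ℕ) : Submodule (ZMod 2) (E → ZMod 2) :=
  Submodule.span (ZMod 2) {c | G.IsWeakCycle k c}

/-- `eps p` : the set of edges of the ttrail `p`, as a vector in `F₂^E`. -/
def eps (p : List (V × E)) : E → ZMod 2 := fun e => if e ∈ p.map Prod.snd then 1 else 0

/-- The `F₂`-linear extension of `f : E → A` to subsets of `E`: the sum of `f` over
the edges of the subset `S`. -/
def fSum {A : Type*} [AddCommGroup A] (f : E → A) (S : E → ZMod 2) : A :=
  ∑ e ∈ Finset.univ.filter fun e => S e = 1, f e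

end Homology

section Balanced

variable {A : Type*} [AddCommGroup A]

/-- The sum `g(v₁)+f(e₁)+…+g(vₙ)+f(eₙ)` of the values of a vertex-function `g` and an
edge-function `f` along a ttrail `v₁,e₁,…,vₙ,eₙ`. -/
def pathSum (g : V → A) (f : E → A) (p : List (V × E)) : A :=
  (p.map fun ve => g ve.1 + f ve.2).sum

/-- The sum `h(v₁)+h(e₁)+…+h(vₙ)+h(eₙ)` of the values of `h : V ∪ E → A` along a
ttrail `v₁,e₁,…,vₙ,eₙ`. -/
def wSum (h : V ⊕ E → A) (p : List (V × E)) : A :=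
  (p.map fun ve => h (Sum.inl ve.1) + h (Sum.inr ve.2)).sum

lemma pathSum_cons (g : V → A) (f : E → A) (a : V × E) (t : List (V × E)) :
    pathSum g f (a :: t) = (g a.1 + f a.2) + pathSum g f t := by
  simp [pathSum]

lemma pathSum_zero (p : List (V × E)) : pathSum (0 : V → A) (0 : E → A) p = 0 := by
  induction p with
  | nil => simp [pathSum]
  | cons a t ih => simp [pathSum_cons, ih]

lemma pathSum_add (g g' : V → A) (f f' : E → A) (p : List (V × E)) :
    pathSum (g + g') (f + f') p = pathSum g f p + pathSum g' f' p := by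
  induction p with
  | nil => simp [pathSum]
  | cons a t ih => simp only [pathSum_cons, Pi.add_apply, ih]; abel

lemma pathSum_neg (g : V → A) (f : E → A) (p : List (V × E)) :
    pathSum (-g) (-f) p = -pathSum g f p := by
  induction p with
  | nil => simp [pathSum]
  | cons a t ih => simp only [pathSum_cons, Pi.neg_apply, ih]; abel

lemma wSum_cons (h : V ⊕ E → A) (a : V × E) (t : List (V × E)) :
    wSum h (a :: t) = (h (Sum.inl a.1) + h (Sum.inr a.2)) + wSum h t := by
  simp [wSum]

lemma wSum_zero (p : List (V × E)) : wSum (0 : V ⊕ E → A) p = 0 := by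
  induction p with
  | nil => simp [wSum]
  | cons a t ih => simp [wSum_cons, ih]

lemma wSum_add (h h' : V ⊕ E → A) (p : List (V × E)) :
    wSum (h + h') p = wSum h p + wSum h' p := by
  induction p with
  | nil => simp [wSum]
  | cons a t ih => simp only [wSum_cons, Pi.add_apply, ih]; abel

lemma wSum_neg (h : V ⊕ E → A) (p : List (V × E)) :
    wSum (-h) p = -wSum h p := by
  induction p with
  | nil => simp [wSum]
  | cons a t ih => simp only [wSum_cons, Pi.neg_apply, ih]; abel

/-- A function `f : E → A` is balanced if the sum of its values along every closed
ttrail of `G` is zero. -/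
def BalancedE (G : Multigraph V E) (f : E → A) : Prop :=
  ∀ x p, G.IsTtrail x x p → pathSum (0 : V → A) f p = 0

/-- A function `g : V → A` is balanceable if some `f : E → A` balances it, i.e. the
sum of the values of `g` and `f` along every closed ttrail of `G` is zero. -/
def Balanceable (G : Multigraph V E) (g : V → A) : Prop :=
  ∃ f : E → A, ∀ x p, G.IsTtrail x x p → pathSum g f p = 0

/-- A function `h : V ∪ E → A` is balanced if the sum of its values along every
closed ttrail of `G` is zero. -/
def BalancedW (G : Multigraph V E) (h : V ⊕ E → A) : Prop :=
  ∀ x p, G.IsTtrail x x p → wSum h p = 0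

/-- `H(E,A)` : the group of balanced functions from `E` to `A`. -/
def Hgroup (G : Multigraph V E) (A : Type*) [AddCommGroup A] : AddSubgroup (E → A) where
  carrier := {f | G.BalancedE f}
  zero_mem' := fun _ p _ => pathSum_zero p
  add_mem' := by
    intro f f' hf hf' x p hp
    have h := pathSum_add (0 : V → A) 0 f f' p
    rw [add_zero] at h
    rw [h, hf x p hp, hf' x p hp, add_zero]
  neg_mem' := by
    intro f hf x p hp
    have h := pathSum_neg (0 : V → A) f p
    rw [neg_zero] at h
    rw [h, hf x p hp, neg_zero]

/-- `B(V,A)` : the group of balanceable functions from `V` to `A`. -/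
def Bgroup (G : Multigraph V E) (A : Type*) [AddCommGroup A] : AddSubgroup (V → A) where
  carrier := {g | G.Balanceable g}
  zero_mem' := ⟨0, fun _ p _ => pathSum_zero p⟩
  add_mem' := by
    rintro g g' ⟨f, hf⟩ ⟨f', hf'⟩
    exact ⟨f + f', fun x p hp => by rw [pathSum_add, hf x p hp, hf' x p hp, add_zero]⟩
  neg_mem' := by
    rintro g ⟨f, hf⟩
    exact ⟨-f, fun x p hp => by rw [pathSum_neg, hf x p hp, neg_zero]⟩

/-- `W(V ∪ E, A)` : the group of balanced functions from `V ∪ E` to `A`. -/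
def Wgroup (G : Multigraph V E) (A : Type*) [AddCommGroup A] : AddSubgroup (V ⊕ E → A) where
  carrier := {h | G.BalancedW h}
  zero_mem' := fun _ p _ => wSum_zero p
  add_mem' := by
    intro h h' hh hh' x p hp
    rw [wSum_add, hh x p hp, hh' x p hp, add_zero]
  neg_mem' := by
    intro h hh x p hp
    rw [wSum_neg, hh x p hp, neg_zero]

end Balanced

/-- A `3`-weakly closed ttrail (a ttrail between `3`-edge-connected vertices) which is
short: no inner vertex is `3`-edge-connected to the initial vertex. -/
def ShortW (G : Multigraph V E) (x y : V) (p : List (V × E)) : Prop :=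
  G.IsTtrail x y p ∧ G.KConn 3 x y ∧ ∀ v ∈ (p.map Prod.fst).tail, ¬ G.KConn 3 v x

/-- `G.ShortChain x y L` : `L` is a list of nontrivial short `3`-weakly closed ttrails
which concatenate into a ttrail from `x` to `y`. -/
def ShortChain (G : Multigraph V E) : V → V → List (List (V × E)) → Prop
  | x, y, [] => x = y
  | x, y, s :: rest => s ≠ [] ∧ ∃ z, G.ShortW x z s ∧ G.ShortChain z y rest

/-- `A₂` : the subgroup of elements of order dividing `2` in `A`. -/
def torsion2 (A : Type*) [AddCommGroup A] : AddSubgroup A where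
  carrier := {a | 2 • a = 0}
  zero_mem' := by simp
  add_mem' := by
    intro a b ha hb
    simp only [Set.mem_setOf_eq] at *
    rw [smul_add, ha, hb, add_zero]
  neg_mem' := by
    intro a ha
    simp only [Set.mem_setOf_eq] at *
    rw [smul_neg, ha, neg_zero]

/-- `2A` : the image of the doubling map `a ↦ 2a`. -/
def double2 (A : Type*) [AddCommGroup A] : AddSubgroup A where
  carrier := {b | ∃ a, b = 2 • a}
  zero_mem' := ⟨0, by simp⟩
  add_mem' := by
    rintro a b ⟨x, rfl⟩ ⟨y, rfl⟩
    exact ⟨x + y, by rw [smul_add]⟩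
  neg_mem' := by
    rintro a ⟨x, rfl⟩
    exact ⟨-x, by rw [smul_neg]⟩

end Multigraph

namespace Multigraph

set_option linter.unusedSectionVars false


/-- The functions orthogonal to a lattice. -/
def perp {ι : Type*} [Fintype ι] (A : Type*) [AddCommGroup A] (L : Submodule ℤ (ι → ℤ)) :
    AddSubgroup (ι → A) where
  carrier := {h | ∀ l ∈ L, ∑ i, l i • h i = 0}
  zero_mem' := by intro l _; simp
  add_mem' := by
    intro a b ha hb l hl
    simp only [Pi.add_apply, smul_add, Finset.sum_add_distrib]
    rw [ha l hl, hb l hl, add_zero]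
  neg_mem' := by
    intro a ha l hl
    simp only [Pi.neg_apply, smul_neg, Finset.sum_neg_distrib]
    rw [ha l hl, neg_zero]

theorem perp_equiv {ι : Type*} [Fintype ι] (A : Type*) [AddCommGroup A]
    (L : Submodule ℤ (ι → ℤ)) (hs : ∀ (n : ℤ) x, n ≠ 0 → n • x ∈ L → x ∈ L) :
    Nonempty (perp A L ≃+ (Fin (Fintype.card ι - Module.finrank ℤ L) → A)) := by
  classical
  have htf : Module.IsTorsionFree ℤ ((ι → ℤ) ⧸ L) := by
    refine Module.IsTorsionFree.of_smul_eq_zero ?_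
    intro n m hm
    induction m using Submodule.Quotient.induction_on with
    | _ x =>
      rw [← Submodule.Quotient.mk_smul, Submodule.Quotient.mk_eq_zero] at hm
      by_cases hn : n = 0
      · exact Or.inl hn
      · right
        rw [Submodule.Quotient.mk_eq_zero]
        exact hs n x hn hm
  have hfree : Module.Free ℤ ((ι → ℤ) ⧸ L) := inferInstance
  have hrank : Module.finrank ℤ ((ι → ℤ) ⧸ L) = Fintype.card ι - Module.finrank ℤ L := by
    have := Submodule.finrank_quotient_add_finrank (R := ℤ) L
    rw [Module.finrank_fintype_fun_eq_card] at this
    omega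
  let b := Module.finBasisOfFinrankEq ℤ ((ι → ℤ) ⧸ L) hrank
  let c : (ι → A) ≃ₗ[ℤ] ((ι → ℤ) →ₗ[ℤ] A) := (Pi.basisFun ℤ ι).constr ℤ
  have hc : ∀ h l, c h l = ∑ i, l i • h i := by
    intro h l
    simp [c, Module.Basis.constr_apply_fintype]
  let e1 : perp A L ≃+ (((ι → ℤ) ⧸ L) →ₗ[ℤ] A) :=
    { toFun := fun h => L.liftQ (c h.1) (by
        intro l hl
        rw [LinearMap.mem_ker, hc]; exact h.2 l hl)
      invFun := fun φ => ⟨c.symm (φ ∘ₗ L.mkQ), by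
        intro l hl
        rw [← hc, LinearEquiv.apply_symm_apply]
        have : L.mkQ l = 0 := by simpa using hl
        rw [LinearMap.comp_apply, this, map_zero]⟩
      left_inv := by
        intro h
        apply Subtype.ext
        simp [Submodule.liftQ_mkQ]
      right_inv := by
        intro φ
        apply Submodule.linearMap_qext
        simp [Submodule.liftQ_mkQ]
      map_add' := by
        intro x y
        apply Submodule.linearMap_qext
        ext
        simp }
  exact ⟨e1.trans (b.constr ℤ).symm.toAddEquiv⟩



section P2
variable {V : Type*} [Fintype V] [DecidableEq V]

/-- The span of the sums of related pairs of vertices. -/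
def relSpan (r : V → V → Prop) : Submodule (ZMod 2) (V → ZMod 2) :=
  Submodule.span (ZMod 2) {x | ∃ v w, r v w ∧ x = vert v + vert w}

theorem vert_add_self (v : V) : (vert v + vert v : V → ZMod 2) = 0 := by
  funext x
  exact CharTwo.add_self_eq_zero _

theorem relSpan_eqvGen (r : V → V → Prop) {v w : V} (h : Relation.EqvGen r v w) :
    (vert v + vert w : V → ZMod 2) ∈ relSpan r := by
  induction h with
  | rel x y h => exact Submodule.subset_span ⟨x, y, h, rfl⟩
  | refl x => rw [vert_add_self]; exact Submodule.zero_mem _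
  | symm x y _ ih => rw [add_comm]; exact ih
  | trans x y z _ _ ih1 ih2 =>
    have := Submodule.add_mem _ ih1 ih2
    have h2 : (vert x + vert y + (vert y + vert z) : V → ZMod 2) =
        vert x + vert z + (vert y + vert y) := by abel
    rwa [h2, vert_add_self, add_zero] at this

theorem relSpan_finrank (r : V → V → Prop) :
    Module.finrank (ZMod 2) (relSpan r) + Nat.card (Quotient (Relation.EqvGen.setoid r))
      = Fintype.card V := by
  classical
  let s := Relation.EqvGen.setoid r
  let Φ : (V → ZMod 2) →ₗ[ZMod 2] (Quotient s → ZMod 2) :=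
    { toFun := fun x q => ∑ v, if (Quotient.mk s v) = q then x v else 0
      map_add' := by
        intro x y; funext q
        simp only [Pi.add_apply, ← Finset.sum_add_distrib]
        refine Finset.sum_congr rfl fun v _ => ?_
        split_ifs <;> simp
      map_smul' := by
        intro c x; funext q
        simp only [Pi.smul_apply, Finset.smul_sum, RingHom.id_apply]
        refine Finset.sum_congr rfl fun v _ => ?_
        split_ifs <;> simp }
  have hΦv : ∀ v, Φ (vert v) = fun q => if Quotient.mk s v = q then 1 else 0 := by
    intro v; funext q
    simp only [Φ, LinearMap.coe_mk, AddHom.coe_mk, vert]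
    rw [Finset.sum_eq_single v]
    · simp
    · intro b _ hb; simp [hb]
    · simp
  have hsum : ∀ x : V → ZMod 2, x = ∑ v, x v • vert v := by
    intro x; funext w
    simp [vert, Finset.sum_apply]
  have hker : LinearMap.ker Φ = relSpan r := by
    apply le_antisymm
    · intro x hx
      have hx0 : ∀ q, (∑ v, if (Quotient.mk s v) = q then x v else 0) = 0 :=
        fun q => congrFun (LinearMap.mem_ker.1 hx) q
      have h1 : (∑ v, x v • (vert v + vert (Quotient.mk s v).out : V → ZMod 2)) ∈ relSpan r := by
        refine Submodule.sum_mem _ fun v _ => Submodule.smul_mem _ _ ?_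
        apply relSpan_eqvGen
        exact Relation.EqvGen.symm _ _ (Quotient.mk_out (s := s) v)
      have h2 : (∑ v, x v • (vert (Quotient.mk s v).out : V → ZMod 2)) = 0 := by
        have : ∀ v, x v • (vert (Quotient.mk s v).out : V → ZMod 2) =
            ∑ q : Quotient s, (if (Quotient.mk s v) = q then x v else 0) • vert q.out := by
          intro v
          rw [Finset.sum_eq_single (Quotient.mk s v)]
          · simp
          · intro b _ hb; simp [hb.symm]
          · simp
        simp only [this]
        rw [Finset.sum_comm]
        refine Finset.sum_eq_zero fun q _ => ?_
        rw [← Finset.sum_smul, hx0 q, zero_smul]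
      simp only [smul_add, Finset.sum_add_distrib, h2, add_zero] at h1
      rwa [← hsum] at h1
    · rw [relSpan, Submodule.span_le]
      rintro _ ⟨v, w, h, rfl⟩
      have : Quotient.mk s v = Quotient.mk s w := Quotient.sound (Relation.EqvGen.rel _ _ h)
      show Φ (vert v + vert w) = 0
      rw [map_add, hΦv, hΦv, this]
      funext q
      exact CharTwo.add_self_eq_zero _
  have hsurj : LinearMap.range Φ = ⊤ := by
    rw [LinearMap.range_eq_top]
    intro y
    refine ⟨∑ q : Quotient s, y q • vert q.out, ?_⟩
    rw [map_sum]
    funext q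
    simp [hΦv, Finset.sum_apply]
  have := LinearMap.finrank_range_add_finrank_ker Φ
  rw [hsurj, hker, finrank_top, Module.finrank_fintype_fun_eq_card,
    Module.finrank_fintype_fun_eq_card] at this
  rw [add_comm, ← this, ← Nat.card_eq_fintype_card]
end P2


section P3
variable {V E : Type*} [Fintype V] [Fintype E] [DecidableEq V] [DecidableEq E]

/-- First endpoint of an edge. -/
noncomputable def tl (G : Multigraph V E) (e : E) : V := (Quot.out (G.ends e)).1
/-- Second endpoint of an edge. -/
noncomputable def hd (G : Multigraph V E) (e : E) : V := (Quot.out (G.ends e)).2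

theorem ends_eq (G : Multigraph V E) (e : E) : G.ends e = s(G.tl e, G.hd e) :=
  (Quot.out_eq (G.ends e)).symm

/-- The edge `e` crosses the cut given by `T`. -/
def cross (G : Multigraph V E) (T : Finset V) (e : E) : Prop := ¬ (G.tl e ∈ T ↔ G.hd e ∈ T)

noncomputable instance (G : Multigraph V E) (T : Finset V) : DecidablePred (G.cross T) :=
  fun e => inferInstanceAs (Decidable (¬ (G.tl e ∈ T ↔ G.hd e ∈ T)))

/-- Unit vector at a vertex. -/
def pt (a : V) : V → ℤ := fun v => if v = a then 1 else 0

/-- Divergence. -/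
noncomputable def dvg (G : Multigraph V E) : (E → ℤ) →ₗ[ℤ] (V → ℤ) where
  toFun f := ∑ e, f e • (pt (G.tl e) - pt (G.hd e))
  map_add' f g := by simp [add_smul, Finset.sum_add_distrib]
  map_smul' r f := by simp [Finset.smul_sum, mul_smul]

/-- `e` in direction `s` leads from `x` to `z`. -/
def arc (G : Multigraph V E) (e : E) (s : ℤ) (x z : V) : Prop :=
  (s = 1 ∧ G.tl e = x ∧ G.hd e = z) ∨ (s = -1 ∧ G.tl e = z ∧ G.hd e = x)

/-- valid flows -/
def valid (f : E → ℤ) : Prop := ∀ e, |f e| ≤ 1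

/-- residual step -/
def rstep (G : Multigraph V E) (f : E → ℤ) (x z : V) : Prop :=
  ∃ e s, G.arc e s x z ∧ |f e + s| ≤ 1

theorem dvg_push (G : Multigraph V E) (f : E → ℤ) {e : E} {s : ℤ} {x z : V}
    (h : G.arc e s x z) : G.dvg (f + Pi.single e s) = G.dvg f + pt x - pt z := by
  rw [map_add]
  have : G.dvg (Pi.single e s) = s • (pt (G.tl e) - pt (G.hd e)) := by
    show ∑ e', (Pi.single e s : E → ℤ) e' • (pt (G.tl e') - pt (G.hd e')) = _
    rw [Finset.sum_eq_single e]
    · simp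
    · intro b _ hb; simp [hb]
    · simp
  rw [this]
  rcases h with ⟨rfl, rfl, rfl⟩ | ⟨rfl, rfl, rfl⟩
  · simp [add_sub_assoc]
  · simp [add_sub_assoc]

theorem first_step {α : Type*} (r : α → α → Prop) {x y : α} (hxy : x ≠ y)
    (h : Relation.ReflTransGen r x y) :
    ∃ z, r x z ∧ Relation.ReflTransGen (fun a b => a ≠ x ∧ r a b) z y := by
  have key : ∀ a, Relation.ReflTransGen r a y →
      (a ≠ x ∧ Relation.ReflTransGen (fun a b => a ≠ x ∧ r a b) a y) ∨
      ∃ z, r x z ∧ Relation.ReflTransGen (fun a b => a ≠ x ∧ r a b) z y := by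
    intro a ha
    induction ha using Relation.ReflTransGen.head_induction_on with
    | refl => exact Or.inl ⟨hxy.symm, Relation.ReflTransGen.refl⟩
    | head hab hby ih =>
      rename_i a b
      rcases ih with ⟨_, hb⟩ | h
      · by_cases hax : a = x
        · subst hax; exact Or.inr ⟨b, hab, hb⟩
        · exact Or.inl ⟨hax, Relation.ReflTransGen.head ⟨hax, hab⟩ hb⟩
      · exact Or.inr h
  rcases key x h with ⟨h, _⟩ | h
  · exact absurd rfl h
  · exact h

theorem augment (G : Multigraph V E) : ∀ (n : ℕ) (X : Finset V) (f : E → ℤ) (x y : V), #X ≤ n →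
    valid f → Relation.ReflTransGen (fun a b => a ∈ X ∧ G.rstep f a b) x y →
    ∃ f', valid f' ∧ G.dvg f' = G.dvg f + pt x - pt y := by
  intro n
  induction n with
  | zero =>
    intro X f x y hX hf h
    have hX0 : X = ∅ := by simpa using hX
    by_cases hxy : x = y
    · subst hxy; exact ⟨f, hf, by simp⟩
    · obtain ⟨z, hz, _⟩ := first_step _ hxy h
      simp [hX0] at hz
  | succ n ih =>
    intro X f x y hX hf h
    by_cases hxy : x = y
    · subst hxy; exact ⟨f, hf, by simp⟩
    · obtain ⟨z, ⟨hxX, e, s, harc, hs⟩, hz⟩ := first_step _ hxy h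
      have hf1 : valid (f + Pi.single e s) := by
        intro e'
        by_cases he : e' = e
        · subst he; simpa using hs
        · simpa [he] using hf e'
      have hreach : Relation.ReflTransGen
          (fun a b => a ∈ X.erase x ∧ G.rstep (f + Pi.single e s) a b) z y := by
        refine Relation.ReflTransGen.mono ?_ _ _ hz
        rintro a b ⟨hax, haX, e', s', harc', hs'⟩
        refine ⟨by simp [hax, haX], e', s', harc', ?_⟩
        by_cases he : e' = e
        · subst he
          have : s' = -s := by
            rcases harc with ⟨rfl, h1, h2⟩ | ⟨rfl, h1, h2⟩ <;>
            rcases harc' with ⟨rfl, h3, h4⟩ | ⟨rfl, h3, h4⟩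
            · exact absurd (h3.symm.trans h1) hax
            · rfl
            · rfl
            · exact absurd (h4.symm.trans h2) hax
          rw [this]
          simpa using hf e'
        · simpa [he] using hs'
      have hdp := dvg_push G f harc
      have hcard : #(X.erase x) ≤ n := by
        have := Finset.card_erase_of_mem hxX
        omega
      generalize f + Pi.single e s = f1 at hf1 hreach hdp
      obtain ⟨f', hf', hd'⟩ := ih (X.erase x) f1 z y hcard hf1 hreach
      refine ⟨f', hf', ?_⟩
      rw [hd', hdp]
      abel

theorem cut_count (G : Multigraph V E) (f : E → ℤ) (hf : valid f) (v w : V) (k : ℤ)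
    (hd : G.dvg f = k • (pt v - pt w))
    (hw : ¬ Relation.ReflTransGen (G.rstep f) v w) :
    ∃ T : Finset V, v ∈ T ∧ w ∉ T ∧ ((#(univ.filter (G.cross T)) : ℕ) : ℤ) = k := by
  classical
  let T : Finset V := univ.filter fun x => Relation.ReflTransGen (G.rstep f) v x
  have hT : ∀ x, x ∈ T ↔ Relation.ReflTransGen (G.rstep f) v x := by simp [T]
  have hvT : v ∈ T := (hT v).2 Relation.ReflTransGen.refl
  have hwT : w ∉ T := by rwa [hT]
  refine ⟨T, hvT, hwT, ?_⟩
  have hpt : ∀ a : V, ∑ x ∈ T, pt a x = if a ∈ T then 1 else 0 := by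
    intro a; simp [pt]
  have h1 : ∑ x ∈ T, G.dvg f x = k := by
    rw [hd]
    simp only [Pi.smul_apply, Pi.sub_apply, ← Finset.smul_sum, Finset.sum_sub_distrib, hpt]
    simp [hvT, hwT]
  have h2 : ∑ x ∈ T, G.dvg f x =
      ∑ e, f e * ((if G.tl e ∈ T then 1 else 0) - (if G.hd e ∈ T then 1 else 0)) := by
    simp only [dvg, LinearMap.coe_mk, AddHom.coe_mk, Finset.sum_apply, Pi.smul_apply, Pi.sub_apply]
    rw [Finset.sum_comm]
    refine Finset.sum_congr rfl fun e _ => ?_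
    rw [← Finset.smul_sum, Finset.sum_sub_distrib, hpt, hpt, smul_eq_mul]
  have h3 : ∀ e, f e * ((if G.tl e ∈ T then 1 else 0) - (if G.hd e ∈ T then 1 else 0))
      = if G.cross T e then 1 else 0 := by
    intro e
    have habs := abs_le.1 (hf e)
    have step : ∀ a b s, G.arc e s a b → a ∈ T → b ∉ T → ¬ |f e + s| ≤ 1 := by
      intro a b s harc ha hb hs
      apply hb
      rw [hT] at ha ⊢
      exact Relation.ReflTransGen.tail ha ⟨e, s, harc, hs⟩
    by_cases ht : G.tl e ∈ T <;> by_cases hh : G.hd e ∈ T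
    · simp [ht, hh, cross]
    · have := step _ _ 1 (Or.inl ⟨rfl, rfl, rfl⟩) ht hh
      rw [abs_le] at this
      simp [ht, hh, cross]; omega
    · have := step _ _ (-1) (Or.inr ⟨rfl, rfl, rfl⟩) hh ht
      rw [abs_le] at this
      simp [ht, hh, cross]; omega
    · simp [ht, hh, cross]
  rw [h2, Finset.sum_congr rfl fun e _ => h3 e] at h1
  rw [← h1]
  simp [Finset.sum_boole]

theorem extract (G : Multigraph V E) (v w : V) : ∀ (n : ℕ) (f : E → ℤ) (k : ℤ) (x : V),
    #{e | f e ≠ 0} ≤ n → valid f → 0 ≤ k →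
    G.dvg f = k • pt v + pt x - (k + 1) • pt w →
    ∃ (p : List (V × E)) (f' : E → ℤ), G.IsTtrail x w p ∧ valid f' ∧
      (∀ e ∈ p.map Prod.snd, f e ≠ 0 ∧ f' e = 0) ∧ (∀ e, f' e ≠ 0 → f e ≠ 0) ∧
      G.dvg f' = k • (pt v - pt w) := by
  intro n
  induction n with
  | zero =>
    intro f k x hn hf hk hd
    have h0 : f = 0 := by
      funext e
      by_contra h
      have : e ∈ ({e | f e ≠ 0} : Finset E) := by simpa using h
      have := Finset.card_pos.2 ⟨e, this⟩
      omega
    have hxw : x = w := by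
      by_contra hxw
      have := congrFun hd x
      rw [h0] at this
      simp [pt, hxw] at this
      split_ifs at this <;> omega
    subst hxw
    refine ⟨[], f, ⟨rfl, by simp⟩, hf, by simp, fun _ h => h, ?_⟩
    rw [hd]; module
  | succ n ih =>
    intro f k x hn hf hk hd
    by_cases hxw : x = w
    · subst hxw
      refine ⟨[], f, ⟨rfl, by simp⟩, hf, by simp, fun _ h => h, ?_⟩
      rw [hd]; module
    have hpos : 0 < G.dvg f x := by
      rw [hd]
      simp only [pt, Pi.add_apply, Pi.sub_apply, Pi.smul_apply, smul_eq_mul, hxw, if_true, if_false]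
      split_ifs <;> omega
    have hex : ∃ e, 0 < f e * (pt (G.tl e) x - pt (G.hd e) x) := by
      by_contra hcon
      push Not at hcon
      have : G.dvg f x ≤ 0 := by
        simp only [dvg, LinearMap.coe_mk, AddHom.coe_mk, Finset.sum_apply, Pi.smul_apply,
          Pi.sub_apply, smul_eq_mul]
        exact Finset.sum_nonpos fun e _ => hcon e
      omega
    obtain ⟨e, he⟩ := hex
    have habs := abs_le.1 (hf e)
    have hfe : f e = -1 ∨ f e = 0 ∨ f e = 1 := by omega
    have hz : ∃ z, G.arc e (-f e) z x ∧ f e ≠ 0 ∧ G.ends e = s(x, z) := by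
      rcases hfe with h | h | h
      · rw [h] at he ⊢
        have hx : x = G.hd e := by
          by_contra hne
          simp only [pt, hne, if_false] at he
          split_ifs at he <;> omega
        exact ⟨G.tl e, Or.inl ⟨by simp, rfl, hx.symm⟩, by simp, by
          rw [ends_eq, Sym2.eq_swap, ← hx]⟩
      · simp [h] at he
      · rw [h] at he ⊢
        have hx : x = G.tl e := by
          by_contra hne
          simp only [pt, hne, if_false] at he
          split_ifs at he <;> omega
        exact ⟨G.hd e, Or.inr ⟨rfl, hx.symm, rfl⟩, by simp, by
          rw [ends_eq, ← hx]⟩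
    obtain ⟨z, harc, hne, hends⟩ := hz
    have hval : ∀ e', (f + Pi.single e (-f e) : E → ℤ) e' = if e' = e then 0 else f e' := by
      intro e'
      by_cases h : e' = e
      · subst h; simp
      · simp [h]
    have hd1 : G.dvg (f + Pi.single e (-f e)) = k • pt v + pt z - (k + 1) • pt w := by
      rw [dvg_push G f harc, hd]; module
    generalize f + Pi.single e (-f e) = f1 at hval hd1
    have hsub : #{e | f1 e ≠ 0} < #{e | f e ≠ 0} := by
      apply Finset.card_lt_card
      rw [Finset.ssubset_iff_of_subset]
      · exact ⟨e, by simpa using hne, by simp [hval]⟩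
      · intro e'
        simp only [Finset.mem_filter, Finset.mem_univ, true_and, hval]
        split_ifs <;> simp
    obtain ⟨p, f', hp, hf', h1, h2, h3⟩ := ih f1 k z (by omega) (by
      intro e'; rw [hval]; split_ifs; · simp
      · exact hf e') hk hd1
    refine ⟨(x, e) :: p, f', ⟨⟨rfl, z, hends, hp.1⟩, ?_⟩, hf', ?_, ?_, h3⟩
    · rw [List.map_cons, List.nodup_cons]
      refine ⟨fun hmem => ?_, hp.2⟩
      have := (h1 e hmem).1
      simp [hval] at this
    · intro e' he'
      rw [List.map_cons, List.mem_cons] at he'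
      rcases he' with rfl | he'
      · refine ⟨hne, ?_⟩
        by_contra hcon
        have := h2 _ hcon
        simp [hval] at this
      · have := h1 e' he'
        refine ⟨?_, this.2⟩
        intro h0
        apply this.1
        rw [hval]; split_ifs <;> simp [h0]
    · intro e' he' h0
      apply h2 e' he'
      rw [hval]; split_ifs <;> simp [h0]

theorem menger3 (G : Multigraph V E) (v w : V)
    (h : ∀ T : Finset V, v ∈ T → w ∉ T → 3 ≤ #(univ.filter (G.cross T))) : G.KConn 3 v w := by
  have aug : ∀ (k : ℤ) (f : E → ℤ), valid f → k < 3 → G.dvg f = k • (pt v - pt w) →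
      ∃ f', valid f' ∧ G.dvg f' = (k + 1) • (pt v - pt w) := by
    intro k f hf hk hd
    have hr : Relation.ReflTransGen (G.rstep f) v w := by
      by_contra hcon
      obtain ⟨T, hv, hw, hc⟩ := G.cut_count f hf v w k hd hcon
      have := h T hv hw
      omega
    obtain ⟨f', hf', hd'⟩ := G.augment (#(univ : Finset V)) univ f v w le_rfl hf
      (Relation.ReflTransGen.mono (fun a b h => ⟨Finset.mem_univ _, h⟩) _ _ hr)
    exact ⟨f', hf', by rw [hd', hd]; module⟩
  obtain ⟨f1, hf1, hd1⟩ := aug 0 0 (by intro e; simp) (by norm_num) (by simp)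
  obtain ⟨f2, hf2, hd2⟩ := aug _ f1 hf1 (by norm_num) hd1
  obtain ⟨f3, hf3, hd3⟩ := aug _ f2 hf2 (by norm_num) hd2
  obtain ⟨p1, g1, hp1, hg1, ha1, hb1, hc1⟩ := G.extract v w _ f3 2 v le_rfl hf3 (by norm_num)
    (by rw [hd3]; module)
  obtain ⟨p2, g2, hp2, hg2, ha2, hb2, hc2⟩ := G.extract v w _ g1 1 v le_rfl hg1 (by norm_num)
    (by rw [hc1]; module)
  obtain ⟨p3, g3, hp3, hg3, ha3, hb3, hc3⟩ := G.extract v w _ g2 0 v le_rfl hg2 (by norm_num)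
    (by rw [hc2]; module)
  have d12 : ∀ e, e ∈ p1.map Prod.snd → e ∈ p2.map Prod.snd → False :=
    fun e h1 h2 => (ha2 e h2).1 (ha1 e h1).2
  have d23 : ∀ e, e ∈ p2.map Prod.snd → e ∈ p3.map Prod.snd → False :=
    fun e h1 h2 => (ha3 e h2).1 (ha2 e h1).2
  have d13 : ∀ e, e ∈ p1.map Prod.snd → e ∈ p3.map Prod.snd → False :=
    fun e h1 h2 => hb2 e (ha3 e h2).1 (ha1 e h1).2
  refine Or.inr ⟨![p1, p2, p3], ?_, ?_⟩
  · intro i; fin_cases i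
    · exact hp1
    · exact hp2
    · exact hp3
  · intro i j hij e h1 h2
    fin_cases i <;> fin_cases j
    · exact hij rfl
    · exact d12 e h1 h2
    · exact d13 e h1 h2
    · exact d12 e h2 h1
    · exact hij rfl
    · exact d23 e h1 h2
    · exact d13 e h2 h1
    · exact d23 e h2 h1
    · exact hij rfl
end P3


section P4
variable {V E : Type*} [Fintype V] [Fintype E] [DecidableEq V] [DecidableEq E]

theorem edgeVec_eq (G : Multigraph V E) {e : E} {a b : V} (h : G.ends e = s(a, b)) :
    G.edgeVec e = vert a + vert b := by
  funext v
  simp [edgeVec, h, vert]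

theorem boundary_eq (G : Multigraph V E) (c : E → ZMod 2) :
    G.boundary c = ∑ e, c e • (vert (G.tl e) + vert (G.hd e)) := by
  funext v
  simp only [boundary, LinearMap.coe_mk, AddHom.coe_mk, Finset.sum_apply, Pi.smul_apply,
    smul_eq_mul]
  refine Finset.sum_congr rfl fun e _ => ?_
  rw [G.edgeVec_eq (G.ends_eq e)]

theorem boundary_single (G : Multigraph V E) {e : E} {a b : V} (h : G.ends e = s(a, b)) :
    G.boundary (Pi.single e 1) = vert a + vert b := by
  rw [← G.edgeVec_eq h]
  funext v
  simp only [boundary, LinearMap.coe_mk, AddHom.coe_mk]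
  rw [Finset.sum_eq_single e]
  · simp
  · intro b _ hb; simp [hb]
  · simp

/-- edges lying on cycles -/
def nb (G : Multigraph V E) (e : E) : Prop := ∃ c ∈ G.cycleSpace, c e ≠ 0

theorem sum_vert (T : Finset V) (a : V) :
    ∑ x ∈ T, (vert a x : ZMod 2) = if a ∈ T then 1 else 0 := by
  simp [vert]

theorem sum_boundary (G : Multigraph V E) (T : Finset V) (c : E → ZMod 2) :
    ∑ x ∈ T, G.boundary c x = ∑ e ∈ univ.filter (G.cross T), c e := by
  rw [boundary_eq]
  simp only [Finset.sum_apply, Pi.smul_apply, Pi.add_apply]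
  rw [Finset.sum_comm, Finset.sum_filter]
  refine Finset.sum_congr rfl fun e _ => ?_
  rw [← Finset.smul_sum, Finset.sum_add_distrib, sum_vert, sum_vert]
  by_cases h1 : G.tl e ∈ T <;> by_cases h2 : G.hd e ∈ T <;> simp [cross, h1, h2]
  right; exact CharTwo.add_self_eq_zero 1

open Classical in
/-- cut edges that are not bridges -/
noncomputable def ncut (G : Multigraph V E) (T : Finset V) : Finset E :=
  univ.filter fun e => G.cross T e ∧ G.nb e

theorem sum_ncut (G : Multigraph V E) (T : Finset V) (c : E → ZMod 2)
    (hc : ∀ e, ¬ G.nb e → c e = 0) :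
    ∑ x ∈ T, G.boundary c x = ∑ e ∈ G.ncut T, c e := by
  classical
  rw [sum_boundary]
  symm
  apply Finset.sum_subset
  · intro e; simp [ncut]; tauto
  · intro e h1 h2
    apply hc
    simp [ncut] at h1 h2
    exact h2 h1

theorem cyc_nb (G : Multigraph V E) {c : E → ZMod 2} (hc : c ∈ G.cycleSpace) (e : E)
    (he : ¬ G.nb e) : c e = 0 := by
  by_contra h
  exact he ⟨c, hc, h⟩

theorem cyc_ncut (G : Multigraph V E) (T : Finset V) {c : E → ZMod 2} (hc : c ∈ G.cycleSpace) :
    ∑ e ∈ G.ncut T, c e = 0 := by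
  rw [← sum_ncut G T c (fun e he => G.cyc_nb hc e he)]
  have : G.boundary c = 0 := hc
  simp [this]

theorem ncut_ne_one (G : Multigraph V E) (T : Finset V) : #(G.ncut T) ≠ 1 := by
  intro h
  obtain ⟨e, he⟩ := Finset.card_eq_one.1 h
  have hm : e ∈ G.ncut T := by simp [he]
  have hnb : G.nb e := by
    simp [ncut] at hm; exact hm.2
  obtain ⟨c, hc, hce⟩ := hnb
  have := G.cyc_ncut T hc
  rw [he] at this
  simp at this
  exact hce this

open Classical in
theorem card_ncut (G : Multigraph V E) (T : Finset V) :
    #(G.ncut T) = ∑ e, if G.cross T e ∧ G.nb e then 1 else 0 := by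
  simp [ncut]

theorem ncut_sub1 (G : Multigraph V E) (S T : Finset V) :
    #(G.ncut (S ∩ T)) + #(G.ncut (S ∪ T)) ≤ #(G.ncut S) + #(G.ncut T) := by
  classical
  simp only [card_ncut, ← Finset.sum_add_distrib]
  refine Finset.sum_le_sum fun e _ => ?_
  by_cases h : G.nb e <;> by_cases h1 : G.tl e ∈ S <;> by_cases h2 : G.hd e ∈ S <;>
    by_cases h3 : G.tl e ∈ T <;> by_cases h4 : G.hd e ∈ T <;> simp [cross, h, h1, h2, h3, h4]

theorem ncut_sub2 (G : Multigraph V E) (S T : Finset V) :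
    #(G.ncut (S \ T)) + #(G.ncut (T \ S)) ≤ #(G.ncut S) + #(G.ncut T) := by
  classical
  simp only [card_ncut, ← Finset.sum_add_distrib]
  refine Finset.sum_le_sum fun e _ => ?_
  by_cases h : G.nb e <;> by_cases h1 : G.tl e ∈ S <;> by_cases h2 : G.hd e ∈ S <;>
    by_cases h3 : G.tl e ∈ T <;> by_cases h4 : G.hd e ∈ T <;> simp [cross, h, h1, h2, h3, h4]

theorem ncut_sub3 (G : Multigraph V E) (S T : Finset V) :
    #(G.ncut S) ≤ #(G.ncut (S ∪ T)) + #(G.ncut (T \ S)) := by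
  classical
  simp only [card_ncut, ← Finset.sum_add_distrib]
  refine Finset.sum_le_sum fun e _ => ?_
  by_cases h : G.nb e <;> by_cases h1 : G.tl e ∈ S <;> by_cases h2 : G.hd e ∈ S <;>
    by_cases h3 : G.tl e ∈ T <;> by_cases h4 : G.hd e ∈ T <;> simp [cross, h, h1, h2, h3, h4]

theorem uncross (G : Multigraph V E) : ∀ (n : ℕ) (B : V → ZMod 2), #(univ.filter fun v => B v ≠ 0) ≤ n →
    (∀ T, #(G.ncut T) ≤ 2 → ∑ v ∈ T, B v = 0) → B ∈ relSpan (G.KConn 3) := by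
  classical
  intro n
  induction n with
  | zero =>
    intro B hB _
    have : B = 0 := by
      funext v
      by_contra h
      have hv : v ∈ univ.filter fun v => B v ≠ 0 := by simpa using h
      have := Finset.card_pos.2 ⟨v, hv⟩
      omega
    rw [this]; exact Submodule.zero_mem _
  | succ n ih =>
    intro B hB hT
    by_cases hB0 : B = 0
    · rw [hB0]; exact Submodule.zero_mem _
    obtain ⟨b, hb⟩ : ∃ b, B b ≠ 0 := by
      by_contra h; push Not at h; exact hB0 (funext h)
    let sB : Finset V := univ.filter fun v => B v ≠ 0
    have hsB : ∀ v, v ∈ sB ↔ B v ≠ 0 := by simp [sB]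
    let Fam : Finset (Finset V) := univ.filter fun S => #(G.ncut S) ≤ 2 ∧ (S ∩ sB).Nonempty
    have hFam : Fam.Nonempty := by
      refine ⟨univ, ?_⟩
      simp only [Fam, Finset.mem_filter, Finset.mem_univ, true_and]
      constructor
      · simp [ncut, cross]
      · exact ⟨b, by simp [hsB, hb]⟩
    obtain ⟨S, hS, hmin⟩ := Finset.exists_min_image Fam (fun S => #(S ∩ sB)) hFam
    simp only [Fam, Finset.mem_filter, Finset.mem_univ, true_and] at hS hmin
    have hone : ∀ v, v ∈ sB → B v = 1 := by
      intro v hv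
      have := (hsB v).1 hv
      revert this; generalize B v = x; revert x; decide
    have hsumS : ((#(S ∩ sB) : ℕ) : ZMod 2) = 0 := by
      rw [← hT S hS.1, Finset.card_eq_sum_ones, Nat.cast_sum]
      rw [← Finset.sum_filter_add_sum_filter_not S (fun v => v ∈ sB)]
      rw [Finset.filter_mem_eq_inter]
      have h2 : ∑ x ∈ S with x ∉ sB, B x = 0 := by
        refine Finset.sum_eq_zero fun v hv => ?_
        simp only [Finset.mem_filter, hsB] at hv
        by_contra h; exact hv.2 h
      rw [h2, add_zero]
      refine Finset.sum_congr rfl fun v hv => ?_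
      rw [hone v (Finset.mem_inter.1 hv).2]; simp
    have htwo : 1 < #(S ∩ sB) := by
      have h1 := Finset.card_pos.2 hS.2
      have h2 : #(S ∩ sB) ≠ 1 := by
        intro h; rw [h] at hsumS; simp at hsumS
      omega
    obtain ⟨v, hv, w, hw, hvw⟩ := Finset.one_lt_card.1 htwo
    rw [Finset.mem_inter] at hv hw
    have sep' : ∀ T, #(G.ncut T) ≤ 2 → ∀ v w, v ∈ S ∩ sB → w ∈ S ∩ sB → v ∈ T → w ∉ T → False := by
      intro T hT2 v w hv hw hvT hwT
      rw [Finset.mem_inter] at hv hw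
      have c1 : 3 ≤ #(G.ncut (S ∩ T)) := by
        by_contra hlt
        have := hmin (S ∩ T) ⟨by omega, v, by simp [hv, hvT]⟩
        have hlt2 : #(S ∩ T ∩ sB) < #(S ∩ sB) := by
          apply Finset.card_lt_card
          rw [Finset.ssubset_iff_of_subset]
          · exact ⟨w, by simp [hw], by simp [hwT]⟩
          · intro x; simp; tauto
        omega
      have c2 : 3 ≤ #(G.ncut (S \ T)) := by
        by_contra hlt
        have := hmin (S \ T) ⟨by omega, w, by simp [hw, hwT]⟩
        have hlt2 : #(S \ T ∩ sB) < #(S ∩ sB) := by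
          apply Finset.card_lt_card
          rw [Finset.ssubset_iff_of_subset]
          · exact ⟨v, by simp [hv], by simp [hvT]⟩
          · intro x; simp; tauto
        omega
      have := G.ncut_sub1 S T
      have := G.ncut_sub2 S T
      have := G.ncut_sub3 S T
      have := G.ncut_ne_one (S ∪ T)
      have := G.ncut_ne_one (T \ S)
      omega
    have sep : ∀ T, #(G.ncut T) ≤ 2 → (v ∈ T ↔ w ∈ T) := by
      intro T hT2
      have h1 := sep' T hT2 v w (by simp [hv]) (by simp [hw])
      have h2 := sep' T hT2 w v (by simp [hw]) (by simp [hv])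
      tauto
    have hK : G.KConn 3 v w := by
      apply G.menger3
      intro T hvT hwT
      by_contra hlt
      have : #(G.ncut T) ≤ #(univ.filter (G.cross T)) := by
        apply Finset.card_le_card
        intro e; simp [ncut]; tauto
      have := sep T (by omega)
      tauto
    have hmem : (vert v + vert w : V → ZMod 2) ∈ relSpan (G.KConn 3) :=
      Submodule.subset_span ⟨v, w, hK, rfl⟩
    have hnew : B + (vert v + vert w) ∈ relSpan (G.KConn 3) := by
      apply ih
      · have : #(univ.filter fun x => (B + (vert v + vert w)) x ≠ 0) < #sB := by
          apply Finset.card_lt_card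
          rw [Finset.ssubset_iff_of_subset]
          · refine ⟨v, hv.2, ?_⟩
            rw [Finset.mem_filter]
            rintro ⟨_, h⟩
            apply h
            simp only [Pi.add_apply, vert, hone v hv.2, if_true, hvw, if_false]
            decide
          · intro x
            simp only [Finset.mem_filter, Finset.mem_univ, true_and, hsB]
            intro hx h0
            apply hx
            have hxv : x ≠ v := by rintro rfl; exact (hsB x).1 hv.2 h0
            have hxw : x ≠ w := by rintro rfl; exact (hsB x).1 hw.2 h0
            simp [vert, h0, hxv, hxw]
        have h3 : #sB ≤ n + 1 := hB
        omega
      · intro T hT2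
        simp only [Pi.add_apply, Finset.sum_add_distrib, hT T hT2, sum_vert, sep T hT2, zero_add]
        exact CharTwo.add_self_eq_zero _
    have := Submodule.sub_mem _ hnew hmem
    simpa using this
end P4


section P5
variable {V E : Type*} [Fintype V] [Fintype E] [DecidableEq V] [DecidableEq E]

theorem z2 (a : ZMod 2) (h : a ≠ 0) : a = 1 := by
  revert a; decide

theorem eps_cons (x : V) (e : E) (p : List (V × E)) (he : e ∉ p.map Prod.snd) :
    (eps ((x, e) :: p) : E → ZMod 2) = Pi.single e 1 + eps p := by
  funext e'
  by_cases h : e' = e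
  · subst h
    simp only [eps, Pi.add_apply, Pi.single_eq_same, if_neg he]
    simp
  · simp [eps, h]

theorem boundary_eps (G : Multigraph V E) : ∀ (p : List (V × E)) (x y : V), G.IsTtrail x y p →
    G.boundary (eps p) = vert x + vert y := by
  intro p
  induction p with
  | nil =>
    rintro x y ⟨h, _⟩
    have h : x = y := h
    subst h
    rw [vert_add_self]
    have : (eps ([] : List (V × E)) : E → ZMod 2) = 0 := by funext e; simp [eps]
    rw [this, map_zero]
  | cons a p ih =>
    obtain ⟨v, e⟩ := a
    rintro x y ⟨⟨rfl, w, hw, hc⟩, hn⟩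
    rw [List.map_cons, List.nodup_cons] at hn
    rw [eps_cons _ _ _ hn.1, map_add, ih w y ⟨hc, hn.2⟩, G.boundary_single hw]
    have : (vert v + vert w + (vert w + vert y) : V → ZMod 2) =
        vert v + vert y + (vert w + vert w) := by abel
    rw [this, vert_add_self, add_zero]

theorem trail_in (G : Multigraph V E) : ∀ (n : ℕ) (c : E → ZMod 2) (x y : V),
    #(univ.filter fun e => c e ≠ 0) ≤ n → G.boundary c = vert x + vert y →
    ∃ p, G.IsTtrail x y p ∧ ∀ e ∈ p.map Prod.snd, c e ≠ 0 := by
  intro n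
  induction n with
  | zero =>
    intro c x y hn hb
    have h0 : c = 0 := by
      funext e
      by_contra h
      have : e ∈ univ.filter fun e => c e ≠ 0 := by simpa using h
      have := Finset.card_pos.2 ⟨e, this⟩
      omega
    have hxy : x = y := by
      by_contra hxy
      have := congrFun hb x
      simp [h0, vert, hxy] at this
    subst hxy
    exact ⟨[], ⟨rfl, by simp⟩, by simp⟩
  | succ n ih =>
    intro c x y hn hb
    by_cases hxy : x = y
    · subst hxy
      exact ⟨[], ⟨rfl, by simp⟩, by simp⟩
    have hx : G.boundary c x ≠ 0 := by
      rw [hb]; simp [vert, hxy]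
    obtain ⟨e, -, he⟩ : ∃ e ∈ univ, c e * G.edgeVec e x ≠ 0 :=
      Finset.exists_ne_zero_of_sum_ne_zero hx
    have hce : c e ≠ 0 := left_ne_zero_of_mul he
    have hee : G.edgeVec e x ≠ 0 := right_ne_zero_of_mul he
    obtain ⟨z, hz⟩ : ∃ z, G.ends e = s(x, z) := by
      rw [G.edgeVec_eq (G.ends_eq e)] at hee
      by_cases h1 : x = G.tl e
      · exact ⟨G.hd e, by rw [h1, ← ends_eq]⟩
      · by_cases h2 : x = G.hd e
        · exact ⟨G.tl e, by rw [h2, Sym2.eq_swap, ← ends_eq]⟩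
        · simp [vert, h1, h2] at hee
    have hval : ∀ e', (c + Pi.single e 1 : E → ZMod 2) e' = if e' = e then 0 else c e' := by
      intro e'
      by_cases h : e' = e
      · subst h; simp [z2 _ hce]; decide
      · simp [h]
    have hb1 : G.boundary (c + Pi.single e 1) = vert z + vert y := by
      rw [map_add, hb, G.boundary_single hz]
      have : (vert x + vert y + (vert x + vert z) : V → ZMod 2) =
        vert z + vert y + (vert x + vert x) := by abel
      rw [this, vert_add_self, add_zero]
    generalize c + Pi.single e 1 = c1 at hval hb1
    have hsub : #(univ.filter fun e => c1 e ≠ 0) < #(univ.filter fun e => c e ≠ 0) := by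
      apply Finset.card_lt_card
      rw [Finset.ssubset_iff_of_subset]
      · exact ⟨e, by simpa using hce, by simp [hval]⟩
      · intro e'
        simp only [Finset.mem_filter, Finset.mem_univ, true_and, hval]
        split_ifs <;> simp
    obtain ⟨p, hp, hpc⟩ := ih c1 z y (by omega) hb1
    refine ⟨(x, e) :: p, ⟨⟨rfl, z, hz, hp.1⟩, ?_⟩, ?_⟩
    · rw [List.map_cons, List.nodup_cons]
      refine ⟨fun hmem => ?_, hp.2⟩
      have := hpc e hmem
      simp [hval] at this
    · intro e' he'
      rw [List.map_cons, List.mem_cons] at he'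
      rcases he' with rfl | he'
      · exact hce
      · have := hpc e' he'
        rw [hval] at this
        intro h0
        apply this
        split_ifs <;> simp [h0]

/-- The lattice vector of a ttrail. -/
def vec (p : List (V × E)) : V ⊕ E → ℤ :=
  (p.map fun a => (Pi.single (Sum.inl a.1) 1 + Pi.single (Sum.inr a.2) 1 : V ⊕ E → ℤ)).sum

theorem vec_cons (a : V × E) (p : List (V × E)) :
    vec (a :: p) = Pi.single (Sum.inl a.1) 1 + Pi.single (Sum.inr a.2) 1 + vec p := by
  simp [vec]

theorem wSum_eq {A : Type*} [AddCommGroup A] (h : V ⊕ E → A) (p : List (V × E)) :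
    wSum h p = ∑ i, vec p i • h i := by
  induction p with
  | nil => simp [wSum, vec]
  | cons a p ih =>
    have hs : ∀ j : V ⊕ E, ∑ i, (Pi.single j 1 : V ⊕ E → ℤ) i • h i = h j := by
      intro j
      rw [Finset.sum_eq_single j]
      · simp
      · intro b _ hb; simp [hb]
      · simp
    rw [wSum_cons, ih, vec_cons]
    simp only [Pi.add_apply, add_smul, Finset.sum_add_distrib, hs]

/-- Degree map. -/
noncomputable def degm (G : Multigraph V E) : (E → ℤ) →ₗ[ℤ] (V → ℤ) where
  toFun f := ∑ e, f e • (pt (G.tl e) + pt (G.hd e))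
  map_add' f g := by simp only [Pi.add_apply, add_smul, Finset.sum_add_distrib]
  map_smul' r f := by simp [Finset.smul_sum, mul_smul]

theorem degm_single (G : Multigraph V E) {e : E} {a b : V} (h : G.ends e = s(a, b)) :
    G.degm (Pi.single e 1) = pt a + pt b := by
  have h1 : G.degm (Pi.single e 1) = pt (G.tl e) + pt (G.hd e) := by
    show ∑ e', (Pi.single e 1 : E → ℤ) e' • (pt (G.tl e') + pt (G.hd e')) = _
    rw [Finset.sum_eq_single e]
    · simp
    · intro b _ hb; simp [hb]
    · simp
  rw [h1]
  rw [ends_eq, Sym2.eq_iff] at h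
  rcases h with ⟨h2, h3⟩ | ⟨h2, h3⟩
  · rw [h2, h3]
  · rw [h2, h3, add_comm]

theorem pt_eq (v : V) : (fun w => (Pi.single (Sum.inl v) 1 : V ⊕ E → ℤ) (Sum.inl w)) = pt v := by
  funext w
  by_cases h : w = v
  · subst h; simp [pt]
  · simp [pt, h]

theorem vec_deg (G : Multigraph V E) : ∀ (p : List (V × E)) (x y : V), G.IsChain x y p →
    (2 : ℤ) • (fun v => vec p (Sum.inl v)) + pt y = G.degm (fun e => vec p (Sum.inr e)) + pt x := by
  intro p
  induction p with
  | nil =>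
    intro x y h
    have h : x = y := h
    subst h
    have : G.degm (fun e => vec ([] : List (V × E)) (Sum.inr e)) = 0 := by
      have : (fun e => vec ([] : List (V × E)) (Sum.inr e)) = (0 : E → ℤ) := by
        funext e; simp [vec]
      rw [this, map_zero]
    rw [this]
    simp [vec]; rfl
  | cons a p ih =>
    obtain ⟨v, e⟩ := a
    rintro x y ⟨rfl, w, hw, hc⟩
    have h1 : (fun u => vec ((v, e) :: p) (Sum.inl u)) = pt v + fun u => vec p (Sum.inl u) := by
      rw [← pt_eq (E := E) v]
      funext u
      rw [vec_cons]; simp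
    have h2 : (fun u => vec ((v, e) :: p) (Sum.inr u)) =
        Pi.single e 1 + fun u => vec p (Sum.inr u) := by
      funext u
      rw [vec_cons]
      by_cases h : u = e
      · subst h; simp
      · simp [h]
    rw [h1, h2, map_add, G.degm_single hw]
    have h3 := ih w y hc
    rw [smul_add, add_assoc, h3]
    module

/-- integer indicator -/
def ind (c : E → ZMod 2) : E → ℤ := fun e => if c e = 0 then 0 else 1

theorem vec_inr (p : List (V × E)) (hp : (p.map Prod.snd).Nodup) :
    (fun e => vec p (Sum.inr e)) = ind (eps p) := by
  induction p with
  | nil => funext e; simp [vec, ind, eps]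
  | cons a p ih =>
    obtain ⟨v, e⟩ := a
    rw [List.map_cons, List.nodup_cons] at hp
    funext u
    have := congrFun (ih hp.2) u
    rw [vec_cons]
    simp only [Pi.add_apply, this, ind, eps_cons v e p hp.1]
    by_cases h : u = e
    · subst h
      have : eps p u = 0 := by simp only [eps, if_neg hp.1]
      simp [this]
    · simp [h]

/-- The lattice of closed ttrails. -/
def Lgen (G : Multigraph V E) : Submodule ℤ (V ⊕ E → ℤ) :=
  Submodule.span ℤ {l | ∃ x p, G.IsTtrail x x p ∧ l = vec p}

theorem Wgroup_eq (G : Multigraph V E) (A : Type*) [AddCommGroup A] :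
    G.Wgroup A = perp A G.Lgen := by
  ext h
  constructor
  · intro hh l hl
    induction hl using Submodule.span_induction with
    | mem l hl =>
      obtain ⟨x, p, hp, rfl⟩ := hl
      rw [← wSum_eq]; exact hh x p hp
    | zero => simp
    | add a b _ _ ha hb => simp [add_smul, Finset.sum_add_distrib, ha, hb]
    | smul r a _ ha => simp [mul_smul, ← Finset.smul_sum, ha]
  · intro hh x p hp
    rw [wSum_eq]
    exact hh _ (Submodule.subset_span ⟨x, p, hp, rfl⟩)

theorem cyc_mem (G : Multigraph V E) : ∀ (n : ℕ) (Z : E → ZMod 2) (x : V ⊕ E → ℤ),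
    #(univ.filter fun e => Z e ≠ 0) ≤ n → Z ∈ G.cycleSpace →
    (fun e => x (Sum.inr e)) = ind Z → (2 : ℤ) • (fun v => x (Sum.inl v)) = G.degm (ind Z) →
    x ∈ G.Lgen := by
  intro n
  induction n with
  | zero =>
    intro Z x hn hZ h1 h2
    have h0 : Z = 0 := by
      funext e
      by_contra h
      have : e ∈ univ.filter fun e => Z e ≠ 0 := by simpa using h
      have := Finset.card_pos.2 ⟨e, this⟩
      omega
    have hi : ind Z = 0 := by funext e; simp [h0, ind]
    rw [hi] at h1 h2
    rw [map_zero] at h2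
    have : x = 0 := by
      funext i
      rcases i with v | e
      · have := congrFun h2 v
        simp at this; exact this
      · exact congrFun h1 e
    rw [this]; exact Submodule.zero_mem _
  | succ n ih =>
    intro Z x hn hZ h1 h2
    by_cases hZ0 : ∃ e, Z e ≠ 0
    swap
    · push Not at hZ0
      exact ih Z x (by simp [hZ0]) hZ h1 h2
    obtain ⟨e, he⟩ := hZ0
    have hb : G.boundary (Z + Pi.single e 1) = vert (G.hd e) + vert (G.tl e) := by
      rw [map_add, G.boundary_single (G.ends_eq e)]
      have : G.boundary Z = 0 := hZ
      rw [this, zero_add, add_comm]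
    have hval : ∀ e', (Z + Pi.single e 1 : E → ZMod 2) e' = if e' = e then 0 else Z e' := by
      intro e'
      by_cases h : e' = e
      · subst h; simp [z2 _ he]; decide
      · simp [h]
    obtain ⟨p, hp, hpZ⟩ := G.trail_in _ _ _ _ le_rfl hb
    have hq : G.IsTtrail (G.tl e) (G.tl e) ((G.tl e, e) :: p) := by
      refine ⟨⟨rfl, G.hd e, G.ends_eq e, hp.1⟩, ?_⟩
      rw [List.map_cons, List.nodup_cons]
      refine ⟨fun hmem => ?_, hp.2⟩
      have := hpZ e hmem
      simp [hval] at this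
    have hqZ : ∀ e' ∈ ((G.tl e, e) :: p).map Prod.snd, Z e' ≠ 0 := by
      intro e' he'
      rw [List.map_cons, List.mem_cons] at he'
      rcases he' with rfl | he'
      · exact he
      · have := hpZ e' he'
        rw [hval] at this
        intro h0
        apply this
        split_ifs <;> simp [h0]
    have heq : e ∈ ((G.tl e, e) :: p).map Prod.snd := by simp
    generalize (G.tl e, e) :: p = q at hq hqZ heq
    have hqC : eps q ∈ G.cycleSpace := by
      show G.boundary (eps q) = 0
      rw [G.boundary_eps q _ _ hq, vert_add_self]
    have hval2 : ∀ e', (Z + eps q : E → ZMod 2) e' = if e' ∈ q.map Prod.snd then 0 else Z e' := by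
      intro e'
      by_cases h : e' ∈ q.map Prod.snd
      · simp only [Pi.add_apply, eps, if_pos h, z2 _ (hqZ e' h)]; decide
      · simp only [Pi.add_apply, eps, if_neg h, add_zero]
    have hind : ind (Z + eps q) = ind Z - ind (eps q) := by
      funext e'
      simp only [ind, Pi.sub_apply, hval2]
      by_cases h : e' ∈ q.map Prod.snd
      · have hh := hqZ e' h
        simp only [eps, if_pos h, if_neg hh]; simp
      · simp only [eps, if_neg h]; simp
    have hqL : vec q ∈ G.Lgen := Submodule.subset_span ⟨_, q, hq, rfl⟩
    have hx' : x - vec q ∈ G.Lgen := by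
      apply ih (Z + eps q) _ _ (Submodule.add_mem _ hZ hqC)
      · rw [hind, ← h1, ← vec_inr q hq.2]; rfl
      · rw [hind, map_sub, ← h2, ← vec_inr q hq.2]
        have := G.vec_deg q _ _ hq.1
        have := add_right_cancel this
        rw [← this, ← smul_sub]; rfl
      · have : #(univ.filter fun e => (Z + eps q) e ≠ 0) < #(univ.filter fun e => Z e ≠ 0) := by
          apply Finset.card_lt_card
          rw [Finset.ssubset_iff_of_subset]
          · exact ⟨e, by simpa using he, by
              rw [Finset.mem_filter, hval2, if_pos heq]; simp⟩
          · intro e'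
            simp only [Finset.mem_filter, Finset.mem_univ, true_and, hval2]
            split_ifs <;> simp
        omega
    have := Submodule.add_mem _ hx' hqL
    simpa using this
end P5


section Part6

variable {V E : Type*} [Fintype V] [Fintype E] [DecidableEq V] [DecidableEq E]

def Usub (G : Multigraph V E) (R : Type*) [CommRing R] : Submodule R (E → R) where
  carrier := {x | (∀ e f, (∀ c ∈ G.cycleSpace, c e = c f) → x e = x f) ∧ ∀ e, ¬ G.nb e → x e = 0}
  zero_mem' := ⟨fun _ _ _ => rfl, fun _ _ => rfl⟩
  add_mem' := by
    rintro x y ⟨h1, h2⟩ ⟨h3, h4⟩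
    exact ⟨fun e f h => by simp [h1 e f h, h3 e f h], fun e h => by simp [h2 e h, h4 e h]⟩
  smul_mem' := by
    rintro r x ⟨h1, h2⟩
    exact ⟨fun e f h => by simp [h1 e f h], fun e h => by simp [h2 e h]⟩

def atS (G : Multigraph V E) : Setoid {e // G.nb e} where
  r e f := ∀ c ∈ G.cycleSpace, c e.1 = c f.1
  iseqv := ⟨fun _ _ _ => rfl, fun h c hc => (h c hc).symm, fun h k c hc => (h c hc).trans (k c hc)⟩

open Classical in
noncomputable def atEquiv (G : Multigraph V E) (R : Type*) [CommRing R] :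
    Usub G R ≃ₗ[R] (Quotient G.atS → R) where
  toFun x := fun q => Quotient.lift (fun e : {e // G.nb e} => x.1 e.1) (fun e f h => x.2.1 _ _ h) q
  map_add' x y := by
    funext q
    induction q using Quotient.inductionOn with
    | h e => rfl
  map_smul' r x := by
    funext q
    induction q using Quotient.inductionOn with
    | h e => rfl
  invFun f := ⟨fun e => if h : G.nb e then f (Quotient.mk G.atS ⟨e, h⟩) else 0, by
    refine ⟨fun e e' h => ?_, fun e h => by simp [h]⟩
    have hn : G.nb e ↔ G.nb e' := by
      constructor
      · rintro ⟨c, hc, h'⟩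
        exact ⟨c, hc, by rwa [← h c hc]⟩
      · rintro ⟨c, hc, h'⟩
        exact ⟨c, hc, by rwa [h c hc]⟩
    by_cases h1 : G.nb e
    · have h2 := hn.1 h1
      simp only [h1, h2, dif_pos]
      congr 1
      exact Quotient.sound h
    · have h2 : ¬ G.nb e' := fun k => h1 (hn.2 k)
      simp [h1, h2]⟩
  left_inv x := by
    apply Subtype.ext
    funext e
    by_cases h : G.nb e
    · simp [h]
    · simp [h, x.2.2 e h]
  right_inv f := by
    funext q
    induction q using Quotient.inductionOn with
    | h e => simp [e.2]

theorem usub_finrank (G : Multigraph V E) (R : Type*) [CommRing R] [Nontrivial R] :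
    Module.finrank R (Usub G R) = Nat.card (Quotient G.atS) := by
  classical
  rw [(G.atEquiv R).finrank_eq, Nat.card_eq_fintype_card, Module.finrank_fintype_fun_eq_card]

theorem mul_usub (G : Multigraph V E) {X Y : E → ZMod 2} (hX : X ∈ G.cycleSpace)
    (hY : Y ∈ G.cycleSpace) : X * Y ∈ Usub G (ZMod 2) := by
  refine ⟨fun e f h => ?_, fun e h => ?_⟩
  · simp [h X hX, h Y hY]
  · simp [G.cyc_nb hX e h]

theorem mul_self2 (X : E → ZMod 2) : X * X = X := by
  funext e
  show X e * X e = X e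
  generalize X e = a
  revert a; decide

theorem cyc_usub (G : Multigraph V E) : G.cycleSpace ≤ Usub G (ZMod 2) := by
  intro X hX
  rw [← mul_self2 X]
  exact mul_usub G hX hX

def prodSpan (G : Multigraph V E) : Submodule (ZMod 2) (E → ZMod 2) :=
  Submodule.span (ZMod 2) {x | ∃ X ∈ G.cycleSpace, ∃ Y ∈ G.cycleSpace, x = X * Y}

theorem prodSpan_le (G : Multigraph V E) : prodSpan G ≤ Usub G (ZMod 2) := by
  apply Submodule.span_le.2
  rintro _ ⟨X, hX, Y, hY, rfl⟩
  exact mul_usub G hX hY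

theorem bd_usub (G : Multigraph V E) {c : E → ZMod 2} (hc : c ∈ Usub G (ZMod 2)) :
    G.boundary c ∈ relSpan (G.KConn 3) := by
  classical
  refine G.uncross _ _ le_rfl (fun T hT => ?_)
  rw [sum_ncut G T c hc.2]
  have h1 := G.ncut_ne_one T
  rcases Nat.lt_or_ge #(G.ncut T) 2 with h | h
  · have h0 : #(G.ncut T) = 0 := by omega
    rw [Finset.card_eq_zero] at h0
    simp [h0]
  · have h2 : #(G.ncut T) = 2 := by omega
    obtain ⟨e, f, hef, hs⟩ := Finset.card_eq_two.1 h2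
    have key : ∀ c' ∈ G.cycleSpace, c' e = c' f := by
      intro c' hc'
      have := G.cyc_ncut T hc'
      rw [hs, Finset.sum_pair hef] at this
      exact CharTwo.add_eq_zero.1 this
    rw [hs, Finset.sum_pair hef, hc.1 e f key]
    exact CharTwo.add_self_eq_zero _

theorem kconn_prod (G : Multigraph V E) {v w : V} (h : G.KConn 3 v w) :
    ∃ d ∈ prodSpan G, G.boundary d = vert v + vert w := by
  rcases h with rfl | ⟨p, hp, hd⟩
  · exact ⟨0, zero_mem _, by rw [map_zero, vert_add_self]⟩
  have hb := fun i => G.boundary_eps (p i) v w (hp i)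
  have hc : ∀ i j, eps (p i) + eps (p j) ∈ G.cycleSpace := by
    intro i j
    show G.boundary _ = 0
    rw [map_add, hb, hb]
    funext x
    exact CharTwo.add_self_eq_zero (R := ZMod 2) _
  refine ⟨_, Submodule.subset_span ⟨_, hc 0 1, _, hc 0 2, rfl⟩, ?_⟩
  rw [← hb 0]
  congr 1
  funext e
  have h01 := hd 0 1 (by decide) e
  have h02 := hd 0 2 (by decide) e
  have h12 := hd 1 2 (by decide) e
  simp only [Pi.mul_apply, Pi.add_apply, eps]
  by_cases a0 : e ∈ (p 0).map Prod.snd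
  · simp [a0, h01 a0, h02 a0]
  · by_cases a1 : e ∈ (p 1).map Prod.snd
    · simp only [a0, a1, h12 a1, if_true, if_false]; decide
    · simp only [a0, a1, if_false]; simp

theorem relSpan_prod (G : Multigraph V E) {B : V → ZMod 2} (h : B ∈ relSpan (G.KConn 3)) :
    ∃ d ∈ prodSpan G, G.boundary d = B := by
  have : relSpan (G.KConn 3) ≤ (prodSpan G).map G.boundary := by
    apply Submodule.span_le.2
    rintro _ ⟨v, w, hvw, rfl⟩
    obtain ⟨d, hd, e⟩ := G.kconn_prod hvw
    exact ⟨d, hd, e⟩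
  obtain ⟨d, hd, e⟩ := this h
  exact ⟨d, hd, e⟩

theorem usub_eq_prod (G : Multigraph V E) : Usub G (ZMod 2) = prodSpan G := by
  apply le_antisymm _ G.prodSpan_le
  intro c hc
  obtain ⟨d, hd, e⟩ := G.relSpan_prod (G.bd_usub hc)
  have h : c - d ∈ G.cycleSpace := by
    show G.boundary _ = 0
    rw [map_sub, e, sub_self]
  have h2 : c - d ∈ prodSpan G := Submodule.subset_span ⟨_, h, _, h, (mul_self2 _).symm⟩
  have := add_mem h2 hd
  simpa using this

theorem range_bd (G : Multigraph V E) : LinearMap.range G.boundary = relSpan (G.KConn 1) := by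
  apply le_antisymm
  · rintro _ ⟨c, rfl⟩
    rw [boundary_eq]
    refine sum_mem fun e _ => Submodule.smul_mem _ _ (Submodule.subset_span ⟨_, _, ?_, rfl⟩)
    refine Or.inr ⟨fun _ => [(G.tl e, e)], fun _ => ⟨⟨rfl, G.hd e, G.ends_eq e, rfl⟩, by simp⟩, ?_⟩
    intro i j hij
    exact absurd (Subsingleton.elim i j) hij
  · apply Submodule.span_le.2
    rintro _ ⟨v, w, rfl | ⟨p, hp, _⟩, rfl⟩
    · rw [vert_add_self]; exact zero_mem _
    · exact ⟨eps (p 0), G.boundary_eps _ _ _ (hp 0)⟩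

theorem card_at (G : Multigraph V E) :
    Nat.card (Quotient G.atS) + G.conk 3 = Fintype.card E + G.con := by
  have h1 := LinearMap.finrank_range_add_finrank_ker G.boundary
  rw [range_bd, Module.finrank_fintype_fun_eq_card] at h1
  have h2 := relSpan_finrank (G.KConn 1)
  have h3 := relSpan_finrank (G.KConn 3)
  have h4 := LinearMap.finrank_range_add_finrank_ker (G.boundary.domRestrict (Usub G (ZMod 2)))
  rw [usub_finrank] at h4
  have h5 : LinearMap.range (G.boundary.domRestrict (Usub G (ZMod 2))) = relSpan (G.KConn 3) := by
    apply le_antisymm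
    · rintro _ ⟨c, rfl⟩
      exact G.bd_usub c.2
    · intro B hB
      obtain ⟨d, hd, e⟩ := G.relSpan_prod hB
      exact ⟨⟨d, G.prodSpan_le hd⟩, e⟩
  rw [h5] at h4
  have h6 : LinearMap.ker (G.boundary.domRestrict (Usub G (ZMod 2)))
      = G.cycleSpace.comap (Usub G (ZMod 2)).subtype := by
    ext x; rfl
  rw [h6, (Submodule.comapSubtypeEquivOfLe G.cyc_usub).finrank_eq] at h4
  unfold con conk
  have h7 : LinearMap.ker G.boundary = G.cycleSpace := rfl
  rw [h7] at h1
  omega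

end Part6


section Part7

variable {V E : Type*} [Fintype V] [Fintype E] [DecidableEq V] [DecidableEq E]

theorem ind_mul (X Y : E → ZMod 2) : (2 : ℤ) • ind (X * Y) = ind X + ind Y - ind (X + Y) := by
  funext e
  have key : ∀ a b : ZMod 2, (2 : ℤ) * (if a * b = 0 then 0 else 1)
      = (if a = 0 then 0 else 1) + (if b = 0 then 0 else 1) - (if a + b = 0 then 0 else 1) := by
    decide
  exact key (X e) (Y e)

theorem ind_cast (X : E → ZMod 2) (e : E) : ((ind X e : ℤ) : ZMod 2) = X e := by
  simp only [ind]
  generalize X e = a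
  revert a; decide

theorem ind_usub (G : Multigraph V E) {c : E → ZMod 2} (hc : c ∈ Usub G (ZMod 2)) :
    ind c ∈ Usub G ℤ := by
  refine ⟨fun e f h => ?_, fun e h => ?_⟩
  · simp [ind, hc.1 e f h]
  · simp [ind, hc.2 e h]

theorem cast_usub (G : Multigraph V E) {x : E → ℤ} (hx : x ∈ Usub G ℤ) :
    (fun e => (x e : ZMod 2)) ∈ Usub G (ZMod 2) := by
  refine ⟨fun e f h => ?_, fun e h => ?_⟩
  · simp [hx.1 e f h]
  · simp [hx.2 e h]

theorem half_usub (G : Multigraph V E) {x : E → ℤ} (hx : x ∈ Usub G ℤ)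
    (h : ∀ e, (x e : ZMod 2) = 0) : ∃ z ∈ Usub G ℤ, x = (2 : ℤ) • z := by
  refine ⟨fun e => x e / 2, ⟨fun e f h => ?_, fun e h => ?_⟩, ?_⟩
  · simp [hx.1 e f h]
  · simp [hx.2 e h]
  · funext e
    have := (ZMod.intCast_zmod_eq_zero_iff_dvd (x e) 2).1 (h e)
    simp only [Pi.smul_apply, smul_eq_mul]
    omega

theorem degm_cast (G : Multigraph V E) (x : E → ℤ) (v : V) :
    ((G.degm x v : ℤ) : ZMod 2) = G.boundary (fun e => (x e : ZMod 2)) v := by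
  rw [boundary_eq]
  have : G.degm x = ∑ e, x e • (pt (G.tl e) + pt (G.hd e)) := rfl
  rw [this]
  simp only [Finset.sum_apply, Pi.smul_apply, Pi.add_apply, smul_eq_mul, Int.cast_sum, Int.cast_mul,
    Int.cast_add]
  refine Finset.sum_congr rfl fun e _ => ?_
  congr 2 <;> simp [pt, vert, Pi.single_apply]

theorem q_ex (G : Multigraph V E) {Z : E → ZMod 2} (hZ : Z ∈ G.cycleSpace) :
    ∃ q ∈ G.Lgen, (∀ e, q (Sum.inr e) = ind Z e) ∧ ∀ v, 2 * q (Sum.inl v) = G.degm (ind Z) v := by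
  have hq : ∀ v, 2 * (G.degm (ind Z) v / 2) = G.degm (ind Z) v := by
    intro v
    have h := G.degm_cast (ind Z) v
    simp only [ind_cast] at h
    have h0 : G.boundary Z = 0 := hZ
    rw [h0] at h
    have := (ZMod.intCast_zmod_eq_zero_iff_dvd _ 2).1 h
    omega
  refine ⟨Sum.elim (fun v => G.degm (ind Z) v / 2) (ind Z), ?_, fun e => rfl, hq⟩
  refine G.cyc_mem _ Z _ le_rfl hZ rfl ?_
  funext v
  exact hq v

noncomputable def Fv (G : Multigraph V E) : (E → ℤ) →ₗ[ℤ] (V ⊕ E → ℤ) where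
  toFun y := Sum.elim (G.degm y) ((2 : ℤ) • y)
  map_add' x y := by
    funext i
    rcases i with v | e
    · simp
    · simp [mul_add]
  map_smul' r x := by
    funext i
    rcases i with v | e
    · exact congrFun (map_smul G.degm r x) v
    · simp; ring

noncomputable def Nsub (G : Multigraph V E) : Submodule ℤ (E → ℤ) := G.Lgen.comap G.Fv

theorem prod_N (G : Multigraph V E) {X Y : E → ZMod 2} (hX : X ∈ G.cycleSpace)
    (hY : Y ∈ G.cycleSpace) : ind (X * Y) ∈ Nsub G := by
  obtain ⟨a, ha, ha1, ha2⟩ := G.q_ex hX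
  obtain ⟨b, hb, hb1, hb2⟩ := G.q_ex hY
  obtain ⟨c, hc, hc1, hc2⟩ := G.q_ex (add_mem hX hY)
  have hm := ind_mul X Y
  have : G.Fv (ind (X * Y)) = a + b - c := by
    funext i
    rcases i with v | e
    · have h1 := congrFun (congrArg G.degm hm) v
      rw [map_smul, map_sub, map_add] at h1
      simp only [Pi.smul_apply, Pi.sub_apply, Pi.add_apply, smul_eq_mul] at h1
      show G.degm _ v = a (Sum.inl v) + b (Sum.inl v) - c (Sum.inl v)
      have := ha2 v
      have := hb2 v
      have := hc2 v
      linarith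
    · show ((2 : ℤ) • ind (X * Y)) e = a (Sum.inr e) + b (Sum.inr e) - c (Sum.inr e)
      rw [hm, ha1, hb1, hc1]
      rfl
  show G.Fv (ind (X * Y)) ∈ G.Lgen
  rw [this]
  exact sub_mem (add_mem ha hb) hc

theorem ind_N (G : Multigraph V E) {X : E → ZMod 2} (hX : X ∈ G.cycleSpace) : ind X ∈ Nsub G := by
  rw [← mul_self2 X]
  exact G.prod_N hX hX

theorem lift_prod (G : Multigraph V E) {c : E → ZMod 2} (hc : c ∈ prodSpan G) :
    ∃ y ∈ Nsub G, y ∈ Usub G ℤ ∧ ∀ e, (y e : ZMod 2) = c e := by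
  induction hc using Submodule.span_induction with
  | mem c hc =>
    obtain ⟨X, hX, Y, hY, rfl⟩ := hc
    exact ⟨_, G.prod_N hX hY, G.ind_usub (G.mul_usub hX hY), ind_cast _⟩
  | zero => exact ⟨0, zero_mem _, zero_mem _, fun e => by simp⟩
  | add a b _ _ iha ihb =>
    obtain ⟨x, h1, h2, h3⟩ := iha
    obtain ⟨y, h4, h5, h6⟩ := ihb
    exact ⟨x + y, add_mem h1 h4, add_mem h2 h5, fun e => by simp [h3, h6]⟩
  | smul r a _ iha =>
    obtain ⟨x, h1, h2, h3⟩ := iha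
    by_cases hr : r = 0
    · exact ⟨0, zero_mem _, zero_mem _, fun e => by simp [hr]⟩
    · refine ⟨x, h1, h2, fun e => by simp [h3, z2 r hr]⟩

theorem step1 (G : Multigraph V E) {x : E → ℤ} (hx : x ∈ Usub G ℤ) :
    ∃ y ∈ Nsub G, ∃ z ∈ Usub G ℤ, x = y + (2 : ℤ) • z := by
  have h := G.cast_usub hx
  rw [usub_eq_prod] at h
  obtain ⟨y, h1, h2, h3⟩ := G.lift_prod h
  obtain ⟨z, hz, e⟩ := G.half_usub (sub_mem hx h2) (fun e => by simp [h3])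
  exact ⟨y, h1, z, hz, by rw [← e]; abel⟩

theorem stepj (G : Multigraph V E) (j : ℕ) : ∀ {x : E → ℤ}, x ∈ Usub G ℤ →
    ∃ y ∈ Nsub G, ∃ z ∈ Usub G ℤ, x = y + (2 : ℤ) ^ j • z := by
  induction j with
  | zero =>
    intro x hx
    exact ⟨0, zero_mem _, x, hx, by simp⟩
  | succ j ih =>
    intro x hx
    obtain ⟨y, hy, z, hz, rfl⟩ := ih hx
    obtain ⟨y', hy', z', hz', rfl⟩ := G.step1 hz
    refine ⟨y + (2 : ℤ) ^ j • y', add_mem hy (Submodule.smul_mem _ _ hy'), z', hz', ?_⟩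
    rw [smul_add, smul_smul, pow_succ, add_assoc]

def Ssub (G : Multigraph V E) : Submodule ℤ (E → ℤ) :=
  Submodule.span ℤ {x | ∃ X ∈ G.cycleSpace, x = ind X}

theorem Ssub_le (G : Multigraph V E) : Ssub G ≤ Nsub G := by
  apply Submodule.span_le.2
  rintro _ ⟨X, hX, rfl⟩
  exact G.ind_N hX

theorem Ssub_mul (G : Multigraph V E) {c : E → ZMod 2} (hc : c ∈ G.cycleSpace) {x : E → ℤ}
    (hx : x ∈ Ssub G) : (2 : ℤ) • (x * ind c) ∈ Ssub G := by
  induction hx using Submodule.span_induction with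
  | mem x hx =>
    obtain ⟨X, hX, rfl⟩ := hx
    have : ind X * ind c = ind (X * c) := by
      funext e
      have key : ∀ a b : ZMod 2, (if a = 0 then (0 : ℤ) else 1) * (if b = 0 then 0 else 1)
          = (if a * b = 0 then 0 else 1) := by
        decide
      exact key (X e) (c e)
    rw [this, ind_mul]
    exact sub_mem (add_mem (Submodule.subset_span ⟨_, hX, rfl⟩) (Submodule.subset_span ⟨_, hc, rfl⟩))
      (Submodule.subset_span ⟨_, add_mem hX hc, rfl⟩)
  | zero => simp
  | add a b _ _ iha ihb =>
    rw [add_mul, smul_add]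
    exact add_mem iha ihb
  | smul r a _ iha =>
    rw [smul_mul_assoc, smul_comm]
    exact Submodule.smul_mem _ _ iha

open Classical in
theorem cls_pow (G : Multigraph V E) (e : E) {c0 : E → ZMod 2} (h0 : c0 ∈ G.cycleSpace)
    (s : Finset (E → ZMod 2)) : (∀ c ∈ s, c ∈ G.cycleSpace) →
    ∃ j : ℕ, (2 : ℤ) ^ j • (fun f => if (∀ c ∈ s, c f = c e) ∧ c0 f ≠ 0 then (1 : ℤ) else 0)
      ∈ Ssub G := by
  induction s using Finset.induction_on with
  | empty =>
    intro _
    refine ⟨0, ?_⟩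
    rw [pow_zero, one_smul]
    refine Submodule.subset_span ⟨c0, h0, ?_⟩
    funext f
    by_cases h : c0 f = 0 <;> simp [ind, h]
  | insert c s hcs ih =>
    intro hs
    obtain ⟨j, hj⟩ := ih (fun c' hc' => hs c' (Finset.mem_insert_of_mem hc'))
    have hm := G.Ssub_mul (hs c (Finset.mem_insert_self _ _)) hj
    refine ⟨j + 1, ?_⟩
    by_cases hce : c e = 0
    · convert sub_mem (Submodule.smul_mem _ (2 : ℤ) hj) hm using 1
      funext f
      simp only [Finset.forall_mem_insert, Pi.smul_apply, Pi.sub_apply, Pi.mul_apply, smul_eq_mul, ind,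
        hce]
      by_cases h1 : c f = 0 <;> by_cases h2 : (∀ c ∈ s, c f = c e) ∧ c0 f ≠ 0 <;>
        simp [h1, h2, pow_succ, mul_comm]
    · convert hm using 1
      funext f
      have hce := z2 _ hce
      simp only [Finset.forall_mem_insert, Pi.smul_apply, Pi.mul_apply, smul_eq_mul, ind, hce]
      by_cases h1 : c f = 0
      · simp [h1]
      · have h1 := z2 _ h1
        by_cases h2 : (∀ c ∈ s, c f = c e) ∧ c0 f ≠ 0 <;>
          simp [h1, h2, pow_succ, mul_comm]

open Classical in
theorem cls_pow2 (G : Multigraph V E) (e : E) (he : G.nb e) :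
    ∃ j : ℕ, (2 : ℤ) ^ j • (fun f => if (∀ c ∈ G.cycleSpace, c f = c e) then (1 : ℤ) else 0)
      ∈ Ssub G := by
  obtain ⟨c0, h0, h1⟩ := he
  obtain ⟨j, hj⟩ := G.cls_pow e h0 (univ.filter fun c => c ∈ G.cycleSpace) (by simp)
  refine ⟨j, ?_⟩
  convert hj using 4 with f
  simp only [Finset.mem_filter, Finset.mem_univ, true_and, eq_iff_iff]
  constructor
  · intro h
    exact ⟨h, by rwa [h c0 h0]⟩
  · exact fun h => h.1

theorem unif (G : Multigraph V E) : ∃ J : ℕ, ∀ x ∈ Usub G ℤ, (2 : ℤ) ^ J • x ∈ Ssub G := by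
  classical
  choose j hj using fun q : Quotient G.atS => G.cls_pow2 q.out.1 q.out.2
  refine ⟨∑ q, j q, fun x hx => ?_⟩
  have hx' : x = ∑ q : Quotient G.atS, x q.out.1 •
      (fun f => if (∀ c ∈ G.cycleSpace, c f = c q.out.1) then (1 : ℤ) else 0) := by
    funext f
    simp only [Finset.sum_apply, Pi.smul_apply, smul_eq_mul, mul_ite, mul_one, mul_zero]
    by_cases hf : G.nb f
    · have hq : ∀ c ∈ G.cycleSpace, c f = c (Quotient.mk G.atS ⟨f, hf⟩).out.1 := by
        have := Quotient.exact (Quotient.out_eq (Quotient.mk G.atS ⟨f, hf⟩))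
        intro c hc
        exact (this c hc).symm
      rw [Finset.sum_eq_single (Quotient.mk G.atS ⟨f, hf⟩)]
      · rw [if_pos hq]
        exact hx.1 _ _ hq
      · intro q _ hne
        rw [if_neg]
        intro h
        apply hne
        rw [← Quotient.out_eq q]
        apply Quotient.sound
        intro c hc
        exact (h c hc).symm
      · simp
    · rw [hx.2 f hf, Finset.sum_eq_zero]
      intro q _
      rw [if_neg]
      intro h
      obtain ⟨c, hc, hne⟩ := q.out.2
      exact hf ⟨c, hc, by rwa [h c hc]⟩
  rw [hx', Finset.smul_sum]
  refine sum_mem fun q _ => ?_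
  rw [smul_comm]
  apply Submodule.smul_mem
  have hle : j q ≤ ∑ q, j q := Finset.single_le_sum (fun _ _ => Nat.zero_le _) (Finset.mem_univ q)
  obtain ⟨k, hk⟩ := Nat.exists_eq_add_of_le' hle
  rw [hk, pow_add, mul_smul]
  exact Submodule.smul_mem _ _ (hj q)

theorem usub_le (G : Multigraph V E) : Usub G ℤ ≤ Nsub G := by
  obtain ⟨J, hJ⟩ := G.unif
  intro x hx
  obtain ⟨y, hy, z, hz, rfl⟩ := G.stepj J hx
  exact add_mem hy (G.Ssub_le (hJ z hz))

noncomputable def Lsat (G : Multigraph V E) : Submodule ℤ (V ⊕ E → ℤ) where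
  carrier := {x | (fun e => x (Sum.inr e)) ∈ Usub G ℤ ∧
    (2 : ℤ) • (fun v => x (Sum.inl v)) = G.degm (fun e => x (Sum.inr e))}
  zero_mem' := by
    refine ⟨zero_mem (Usub G ℤ), ?_⟩
    have : G.degm (fun e => (0 : V ⊕ E → ℤ) (Sum.inr e)) = 0 := map_zero G.degm
    rw [this]
    funext v; simp
  add_mem' := by
    rintro x y ⟨h1, h2⟩ ⟨h3, h4⟩
    refine ⟨add_mem h1 h3, ?_⟩
    have : G.degm (fun e => (x + y) (Sum.inr e))
      = G.degm (fun e => x (Sum.inr e)) + G.degm (fun e => y (Sum.inr e)) := map_add G.degm _ _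
    rw [this, ← h2, ← h4, ← smul_add]
    rfl
  smul_mem' := by
    rintro r x ⟨h1, h2⟩
    refine ⟨Submodule.smul_mem _ r h1, ?_⟩
    have : G.degm (fun e => (r • x) (Sum.inr e))
      = r • G.degm (fun e => x (Sum.inr e)) := map_smul G.degm _ _
    rw [this, ← h2, smul_comm]
    rfl

theorem Lgen_eq (G : Multigraph V E) : G.Lgen = Lsat G := by
  apply le_antisymm
  · apply Submodule.span_le.2
    rintro _ ⟨x, p, hp, rfl⟩
    have hC : eps p ∈ G.cycleSpace := by
      show G.boundary _ = 0
      rw [G.boundary_eps p x x hp, vert_add_self]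
    refine ⟨?_, add_right_cancel (G.vec_deg p x x hp.1)⟩
    rw [vec_inr p hp.2]
    exact G.ind_usub (G.cyc_usub hC)
  · rintro x ⟨h1, h2⟩
    have hZ : (fun e => ((x (Sum.inr e) : ℤ) : ZMod 2)) ∈ G.cycleSpace := by
      show G.boundary _ = 0
      funext v
      rw [← G.degm_cast (fun e => x (Sum.inr e)) v, ← h2]
      simp only [Pi.smul_apply, smul_eq_mul, Int.cast_mul]
      have : ((2 : ℤ) : ZMod 2) = 0 := by decide
      rw [this, zero_mul]
      rfl
    obtain ⟨q, hq, hq1, hq2⟩ := G.q_ex hZ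
    obtain ⟨w, hw, e⟩ := G.half_usub (sub_mem h1 (G.ind_usub (G.cyc_usub hZ)))
      (fun e => by simp [ind_cast])
    have hF : x - q = G.Fv w := by
      funext i
      rcases i with v | f
      · show x (Sum.inl v) - q (Sum.inl v) = G.degm w v
        have h3 := congrFun (congrArg G.degm e) v
        rw [map_smul, map_sub] at h3
        have h4 := congrFun h2 v
        have h5 := hq2 v
        simp only [Pi.smul_apply, Pi.sub_apply, smul_eq_mul] at h3 h4
        linarith
      · show x (Sum.inr f) - q (Sum.inr f) = ((2 : ℤ) • w) f
        rw [hq1, ← e]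
        rfl
    have : G.Fv w ∈ G.Lgen := G.usub_le hw
    rw [← hF] at this
    have := add_mem this hq
    simpa using this

theorem Lsat_sat (G : Multigraph V E) (n : ℤ) (x : V ⊕ E → ℤ) (hn : n ≠ 0)
    (h : n • x ∈ Lsat G) : x ∈ Lsat G := by
  obtain ⟨h1, h2⟩ := h
  refine ⟨⟨fun e f hef => ?_, fun e he => ?_⟩, ?_⟩
  · exact mul_left_cancel₀ hn (h1.1 e f hef)
  · have := h1.2 e he
    exact mul_left_cancel₀ hn (this.trans (mul_zero n).symm)
  · have h3 : G.degm (fun e => (n • x) (Sum.inr e))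
      = n • G.degm (fun e => x (Sum.inr e)) := map_smul G.degm _ _
    rw [h3] at h2
    funext v
    have h4 := congrFun h2 v
    simp only [Pi.smul_apply, smul_eq_mul] at h4 ⊢
    apply mul_left_cancel₀ hn
    linarith

theorem Lsat_finrank (G : Multigraph V E) :
    Module.finrank ℤ (Lsat G) = Nat.card (Quotient G.atS) := by
  rw [← G.usub_finrank ℤ]
  apply le_antisymm
  · let φ : Lsat G →ₗ[ℤ] Usub G ℤ :=
      { toFun := fun x => ⟨fun e => x.1 (Sum.inr e), x.2.1⟩
        map_add' := fun _ _ => rfl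
        map_smul' := fun _ _ => rfl }
    apply LinearMap.finrank_le_finrank_of_injective (f := φ)
    intro x y hxy
    have h : (fun e => x.1 (Sum.inr e)) = fun e => y.1 (Sum.inr e) := congrArg Subtype.val hxy
    apply Subtype.ext
    funext i
    rcases i with v | e
    · have h1 := congrFun x.2.2 v
      have h2 := congrFun y.2.2 v
      rw [h, ← h2] at h1
      simp only [Pi.smul_apply, smul_eq_mul] at h1
      omega
    · exact congrFun h e
  · have hm : ∀ y : Usub G ℤ, G.Fv y.1 ∈ Lsat G := by
      intro y
      rw [← Lgen_eq]
      exact G.usub_le y.2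
    apply LinearMap.finrank_le_finrank_of_injective
      (f := (G.Fv.domRestrict (Usub G ℤ)).codRestrict (Lsat G) hm)
    intro x y hxy
    have h : G.Fv x.1 = G.Fv y.1 := congrArg Subtype.val hxy
    apply Subtype.ext
    funext e
    have h1 : 2 * x.1 e = 2 * y.1 e := congrFun h (Sum.inr e)
    omega

end Part7


variable {V E : Type*} [Fintype V] [Fintype E] [DecidableEq V] [DecidableEq E]


theorem stmt18 (G : Multigraph V E) (A : Type*) [AddCommGroup A] :
    Nonempty ((G.Wgroup A) ≃+ (Fin (Fintype.card V + G.conk 3 - G.con) → A)) := by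
  have h := perp_equiv A (Lsat G) (G.Lsat_sat)
  rw [G.Lsat_finrank, ← G.Lgen_eq, ← G.Wgroup_eq] at h
  have h1 := G.card_at
  have h2 : Fintype.card (V ⊕ E) - Nat.card (Quotient G.atS)
      = Fintype.card V + G.conk 3 - G.con := by
    rw [Fintype.card_sum]
    omega
  rwa [h2] at h

end Multigraph
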